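/- Let ℓ ≥ 2, let A be an essential hyperplane arrangement in K^ℓ, let H ∈ A, and suppose A' = A \ {H} is also essential and nonempty. Let r = r(A), r' = r(A') and r'' = r(A^H), where A^H is the restricted arrangement in H ≅ K^{ℓ-1}. If r = r', then r'' ≤ r. -/

import Mathlib

open Classical MvPolynomial

variable {K : Type*} [Field K] [CharZero K] {ℓ : ℕ}

/-- A (central) hyperplane arrangement: a finite set of nonzero linear forms,
pairwise non-proportional. -/
def IsArrangement (A : Finset (MvPolynomial (Fin ℓ) K)) : Prop :=
  (∀ α ∈ A, α ≠ 0 ∧ α.IsHomogeneous 1) ∧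
    ∀ α ∈ A, ∀ β ∈ A, α ≠ β → ∀ c : K, α ≠ c • β

/-- The arrangement is essential: the common zero set of its forms is `{0}`. -/
def IsEssential (A : Finset (MvPolynomial (Fin ℓ) K)) : Prop :=
  ∀ v : Fin ℓ → K, (∀ α ∈ A, eval v α = 0) → v = 0

/-- The defining polynomial `Q(A)`. -/
noncomputable def Qpoly (A : Finset (MvPolynomial (Fin ℓ) K)) : MvPolynomial (Fin ℓ) K :=
  ∏ α ∈ A, α

/-- Apply a derivation `θ = Σ θ_j ∂_j` to a polynomial. -/
noncomputable def applyDer (θ : Fin ℓ → MvPolynomial (Fin ℓ) K)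
    (f : MvPolynomial (Fin ℓ) K) : MvPolynomial (Fin ℓ) K :=
  ∑ j, θ j * pderiv j f

/-- The minimal degree of a Jacobian relation `r(A)`. -/
noncomputable def mdr (A : Finset (MvPolynomial (Fin ℓ) K)) : ℕ :=
  sInf {r | ∃ θ : Fin ℓ → MvPolynomial (Fin ℓ) K, θ ≠ 0 ∧
    (∀ j, (θ j).IsHomogeneous r) ∧ applyDer θ (Qpoly A) = 0}

/-- The number of elements `|A^H|` of the restriction of `A` to `H`:
the number of distinct subspaces `H ∩ ker α_L`, `L ∈ A \ {H}`. -/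
noncomputable def restCard (A : Finset (MvPolynomial (Fin ℓ) K))
    (H : MvPolynomial (Fin ℓ) K) : ℕ :=
  ((A.erase H).image fun L => {v : Fin ℓ → K | eval v H = 0 ∧ eval v L = 0}).card

/-- `B` is a realization (in `ℓ - 1` variables) of the restricted arrangement `A^H`:
there is an injective linear parametrization `e` of the hyperplane `H = ker α_H`
such that the zero sets of the forms of `B` correspond exactly to the traces
`H ∩ ker α_L`, `L ∈ A \ {H}`, of the other hyperplanes of `A` on `H`. -/
def IsRestrictionOf (A : Finset (MvPolynomial (Fin ℓ) K)) (H : MvPolynomial (Fin ℓ) K)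
    (B : Finset (MvPolynomial (Fin (ℓ - 1)) K)) : Prop :=
  IsArrangement B ∧
  ∃ e : (Fin (ℓ - 1) → K) →ₗ[K] (Fin ℓ → K),
    Function.Injective e ∧ (∀ w, eval (e w) H = 0) ∧
    (B.image fun β => {w : Fin (ℓ - 1) → K | eval w β = 0}) =
      ((A.erase H).image fun L => {w : Fin (ℓ - 1) → K | eval (e w) L = 0})

/-!
Put `n = |A|`. Since `θ_E Q(A) = n Q(A)` and the characteristic is zero, subtracting a multiple of
`θ_E` makes any `θ ∈ D(A)` annihilate `Q(A)`; so in degrees below `r(A)` the module `D(A)` consists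
of multiples of `θ_E`. Suppose `r < r''` and let `θ ∈ D_0(A)` be nonzero of degree `r`. It induces
on `H` a derivation in `D(A^H)` of degree `r < r''`, which is therefore a multiple of the Euler
derivation of `H`. Lifting the factor to `S` gives `θ = f θ_E + α_H φ` with `φ ∈ D(A')` of degree
`r - 1 < r = r'`. Hence `φ` is a multiple of `θ_E`, and so is `θ`. But a nonzero multiple of `θ_E`
does not annihilate `Q(A)`.
-/

section Derivation

variable {R S T ι : Type*}

theorem prod_dvd_derivation_prod [CommSemiring R] [CommSemiring S] [Algebra R S]
    (D : Derivation R S S) {s : Finset ι} {f : ι → S} (h : ∀ i ∈ s, f i ∣ D (f i)) :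
    ∏ i ∈ s, f i ∣ D (∏ i ∈ s, f i) := by
  induction s using Finset.induction_on with
  | empty => simp
  | insert i s hi ih =>
    simp only [Finset.mem_insert, forall_eq_or_imp] at h
    rw [Finset.prod_insert hi, D.leibniz, smul_eq_mul, smul_eq_mul, mul_comm _ (D (f i))]
    exact dvd_add (mul_dvd_mul_left _ (ih h.2)) (mul_dvd_mul_right h.1 _)

variable [CommRing R] [CommRing S] [CommRing T] [Algebra R S] [Algebra R T]

theorem dvd_derivation_of_dvd_derivation_prod (D : Derivation R S S) {s : Finset ι} {f : ι → S}
    {i : ι} (hi : i ∈ s) (hp : Prime (f i)) (hs : ∀ j ∈ s, j ≠ i → ¬ f i ∣ f j)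
    (h : f i ∣ D (∏ j ∈ s, f j)) : f i ∣ D (f i) := by
  rw [← Finset.mul_prod_erase s f hi, D.leibniz, smul_eq_mul, smul_eq_mul,
    dvd_add_right (dvd_mul_right _ _)] at h
  refine (hp.dvd_or_dvd h).resolve_left fun hdvd => ?_
  obtain ⟨j, hj, hij⟩ := (hp.dvd_finsetProd_iff _).1 hdvd
  exact hs j (Finset.mem_of_mem_erase hj) (Finset.ne_of_mem_erase hj) hij

/-- The derivation `π ∘ D ∘ s` of `T`, for a retraction `π : S → T` of algebras with section `s`.
It is the derivation that `D` induces on the quotient `T` of `S` whenever `D` preserves `ker π`. -/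
def inducedDerivation (D : Derivation R S S) {π : S →ₐ[R] T} {s : T →ₐ[R] S}
    (h : Function.LeftInverse π s) : Derivation R T T :=
  Derivation.mk' (π.toLinearMap ∘ₗ D.toLinearMap ∘ₗ s.toLinearMap) fun a b => by
    simp [h a, h b]

theorem inducedDerivation_apply (D : Derivation R S S) {π : S →ₐ[R] T} {s : T →ₐ[R] S}
    (h : Function.LeftInverse π s) (y : T) : inducedDerivation D h y = π (D (s y)) := rfl

theorem inducedDerivation_map {D : Derivation R S S} {π : S →ₐ[R] T} {s : T →ₐ[R] S}
    (h : Function.LeftInverse π s) {a : S} (hπ : ∀ x, π x = 0 ↔ a ∣ x) (hD : a ∣ D a) (x : S) :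
    inducedDerivation D h (π x) = π (D x) := by
  obtain ⟨y, hy⟩ : a ∣ s (π x) - x := (hπ _).1 (by rw [map_sub, h, sub_self])
  have hDy : a ∣ D (s (π x) - x) := by
    rw [hy, D.leibniz, smul_eq_mul, smul_eq_mul]
    exact dvd_add (dvd_mul_right _ _) (dvd_mul_of_dvd_right hD _)
  rw [inducedDerivation_apply, ← sub_eq_zero, ← map_sub, ← map_sub]
  exact (hπ _).2 hDy

end Derivation

section Homogeneous

variable {R σ : Type*} [CommRing R] [IsDomain R] {f g : MvPolynomial σ R} {a b d : ℕ}

theorem exists_isHomogeneous_of_mul (hf : f.IsHomogeneous a) (hf0 : f ≠ 0) (hg0 : g ≠ 0)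
    (hfg : (f * g).IsHomogeneous b) : ∃ c, a + c = b ∧ g.IsHomogeneous c := by
  have hdeg : a + g.totalDegree = b := by
    rw [← hf.totalDegree hf0, ← totalDegree_mul_of_isDomain hf0 hg0,
      hfg.totalDegree (mul_ne_zero hf0 hg0)]
  refine ⟨g.totalDegree, hdeg, ?_⟩
  let : GradedAlgebra (homogeneousSubmodule σ R) := gradedAlgebra
  have hcomp := DirectSum.coe_decompose_mul_add_of_left_mem (homogeneousSubmodule σ R)
    (b := g) (j := g.totalDegree) hf
  rw [hdeg, DirectSum.decompose_of_mem_same _ hfg] at hcomp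
  have hg := (DirectSum.decompose (homogeneousSubmodule σ R) g g.totalDegree).2
  rwa [← mul_left_cancel₀ hf0 hcomp] at hg

theorem isHomogeneous_of_mul (hf : f.IsHomogeneous a) (hf0 : f ≠ 0)
    (hfg : (f * g).IsHomogeneous (a + b)) : g.IsHomogeneous b := by
  rcases eq_or_ne g 0 with rfl | hg0
  · exact isHomogeneous_zero _ _ _
  · obtain ⟨c, hc, hg⟩ := exists_isHomogeneous_of_mul hf hf0 hg0 hfg
    rwa [← Nat.add_left_cancel hc]

theorem isHomogeneous_mul_of_isHomogeneous_mul {h h' : MvPolynomial σ R} (hh : h.IsHomogeneous d)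
    (hh0 : h ≠ 0) (hh' : h'.IsHomogeneous d) (hfh : (f * h).IsHomogeneous b) :
    (f * h').IsHomogeneous b := by
  refine isHomogeneous_of_mul hh hh0 ?_
  rw [← mul_assoc, mul_comm h, add_comm]
  exact hfh.mul hh'

end Homogeneous

section HomogeneousDerivation

variable {R σ : Type*} [CommSemiring R]

/-- The Euler derivation `θ_E = ∑ xᵢ ∂ᵢ`. -/
noncomputable def eulerDerivation (R σ : Type*) [CommSemiring R] :
    Derivation R (MvPolynomial σ R) (MvPolynomial σ R) :=
  mkDerivation R X

/-- `D` is homogeneous of polynomial degree `r`: it sends the variables, hence all linear forms, to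
homogeneous polynomials of degree `r`. The zero derivation is homogeneous of every degree. -/
def IsHomogeneousDerivation (D : Derivation R (MvPolynomial σ R) (MvPolynomial σ R)) (r : ℕ) :
    Prop :=
  ∀ i, (D (X i)).IsHomogeneous r

theorem derivation_apply_eq_sum [Fintype σ] (D : Derivation R (MvPolynomial σ R) (MvPolynomial σ R))
    (f : MvPolynomial σ R) : D f = ∑ i, D (X i) * pderiv i f := by
  have hsum (g : MvPolynomial σ R) :
      (∑ i, D (X i) • pderiv i) g = ∑ i, D (X i) * pderiv i g := by
    rw [← Derivation.coeFnAddMonoidHom_apply, map_sum, Finset.sum_apply]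
    simp
  have hD : D = ∑ i, D (X i) • pderiv i := derivation_ext fun j => by
    simp [hsum, pderiv_X, Pi.single_apply]
  rw [← hsum, ← hD]

theorem eulerDerivation_apply_of_isHomogeneous [Finite σ] {f : MvPolynomial σ R} {n : ℕ}
    (hf : f.IsHomogeneous n) : eulerDerivation R σ f = n • f := by
  cases nonempty_fintype σ
  rw [derivation_apply_eq_sum, ← hf.sum_X_mul_pderiv]
  simp [eulerDerivation]

theorem isHomogeneousDerivation_pderiv (i : σ) :
    IsHomogeneousDerivation (pderiv (R := R) i) 0 := fun j => by
  rw [pderiv_X, Pi.single_apply]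
  split_ifs
  exacts [isHomogeneous_one _ _, isHomogeneous_zero _ _ _]

namespace IsHomogeneousDerivation

variable {D : Derivation R (MvPolynomial σ R) (MvPolynomial σ R)} {f : MvPolynomial σ R} {d r : ℕ}

theorem smul (hD : IsHomogeneousDerivation D r) (hf : f.IsHomogeneous d) :
    IsHomogeneousDerivation (f • D) (d + r) :=
  fun i => hf.mul (hD i)

theorem apply [Finite σ] (hD : IsHomogeneousDerivation D r) (hf : f.IsHomogeneous d) :
    (D f).IsHomogeneous (r + (d - 1)) := by
  cases nonempty_fintype σ
  rw [derivation_apply_eq_sum]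
  exact IsHomogeneous.sum _ _ _ fun i _ => (hD i).mul hf.pderiv

end IsHomogeneousDerivation

theorem exists_eq_smul_of_dvd_apply_X
    {D : Derivation R (MvPolynomial σ R) (MvPolynomial σ R)} {a : MvPolynomial σ R}
    (h : ∀ i, a ∣ D (X i)) :
    ∃ φ : Derivation R (MvPolynomial σ R) (MvPolynomial σ R), D = a • φ := by
  choose q hq using h
  exact ⟨mkDerivation R q, derivation_ext fun i => by simp [hq]⟩

end HomogeneousDerivation

section HomogeneousDerivationRing

variable {R σ : Type*} [CommRing R] {D E : Derivation R (MvPolynomial σ R) (MvPolynomial σ R)}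
  {f : MvPolynomial σ R} {d n r : ℕ}

theorem IsHomogeneousDerivation.sub (hD : IsHomogeneousDerivation D r)
    (hE : IsHomogeneousDerivation E r) : IsHomogeneousDerivation (D - E) r :=
  fun i => (hD i).sub (hE i)

theorem IsHomogeneousDerivation.exists_of_smul [IsDomain R]
    (hfD : IsHomogeneousDerivation (f • D) r) (hf : f.IsHomogeneous d) (hf0 : f ≠ 0) (hD0 : D ≠ 0) :
    ∃ c, d + c = r ∧ IsHomogeneousDerivation D c := by
  obtain ⟨i, hi⟩ : ∃ i, D (X i) ≠ 0 := by
    by_contra! h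
    exact hD0 (derivation_ext fun i => by simp [h i])
  obtain ⟨c, rfl, -⟩ := exists_isHomogeneous_of_mul hf hf0 hi (hfD i)
  exact ⟨c, rfl, fun j => isHomogeneous_of_mul hf hf0 (hfD j)⟩

theorem exists_isHomogeneousDerivation_apply_eq_zero [Nontrivial R] [Nontrivial σ]
    (hf : f.IsHomogeneous n) :
    ∃ (r : ℕ) (D : Derivation R (MvPolynomial σ R) (MvPolynomial σ R)),
      D ≠ 0 ∧ IsHomogeneousDerivation D r ∧ D f = 0 := by
  obtain ⟨i, j, hij⟩ := exists_pair_ne σ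
  by_cases hfi : pderiv i f = 0
  · refine ⟨0, pderiv i, fun h => ?_, isHomogeneousDerivation_pderiv i, hfi⟩
    simpa using Derivation.congr_fun h (X i)
  · refine ⟨_, pderiv i f • pderiv j - pderiv j f • pderiv i, fun h => hfi ?_,
      ((isHomogeneousDerivation_pderiv j).smul hf.pderiv).sub
        ((isHomogeneousDerivation_pderiv i).smul hf.pderiv), ?_⟩
    · simpa [pderiv_X_of_ne hij.symm] using Derivation.congr_fun h (X j)
    · simp [mul_comm]

end HomogeneousDerivationRing

section LinearForm

variable {k σ τ : Type*} [Field k] {f g : MvPolynomial σ k}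

theorem prime_of_isHomogeneous_one (hf : f.IsHomogeneous 1) (hf0 : f ≠ 0) : Prime f := by
  refine (irreducible_of_totalDegree_eq_one (hf.totalDegree hf0) fun x hx => ?_).prime
  obtain ⟨d, hd⟩ := ne_zero_iff.1 hf0
  exact (ne_zero_of_dvd_ne_zero hd (hx d)).isUnit

theorem exists_eq_smul_of_dvd_of_isHomogeneous_one (hf : f.IsHomogeneous 1)
    (hg : g.IsHomogeneous 1) (h : f ∣ g) : ∃ c : k, g = c • f := by
  obtain ⟨q, rfl⟩ := h
  rcases eq_or_ne f 0 with rfl | hf0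
  · exact ⟨0, by simp⟩
  · have hq := (totalDegree_zero_iff_isHomogeneous _).2 (isHomogeneous_of_mul (b := 0) hf hf0 hg)
    refine ⟨coeff 0 q, ?_⟩
    rw [smul_eq_C_mul, ← totalDegree_eq_zero_iff_eq_C.1 hq, mul_comm]

theorem eq_of_isHomogeneous_one_of_eval_eq (hf : f.IsHomogeneous 1) (hg : g.IsHomogeneous 1)
    (h : ∀ v, eval v f = eval v g) : f = g :=
  hf.funext_of_le_card hg h (by simp [Cardinal.one_le_iff_ne_zero])

theorem exists_dual_eq_eval [Finite σ] (hf : f.IsHomogeneous 1) :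
    ∃ φ : Module.Dual k (σ → k), ∀ v, φ v = eval v f := by
  cases nonempty_fintype σ
  rw [← mem_homogeneousSubmodule, homogeneousSubmodule_one_eq_span_X,
    Submodule.mem_span_range_iff_exists_fun] at hf
  obtain ⟨a, rfl⟩ := hf
  exact ⟨∑ i, a i • LinearMap.proj i, fun v => by simp [smul_eval]⟩

theorem exists_eq_smul_of_eval_eq_zero [Finite σ] (hf : f.IsHomogeneous 1) (hg : g.IsHomogeneous 1)
    (h : ∀ v, eval v f = 0 → eval v g = 0) : ∃ c : k, g = c • f := by
  obtain ⟨φ, hφ⟩ := exists_dual_eq_eval hf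
  obtain ⟨ψ, hψ⟩ := exists_dual_eq_eval hg
  have hspan : ψ ∈ Submodule.span k (Set.range fun _ : Unit => φ) :=
    mem_span_of_iInf_ker_le_ker fun v hv => by
      simpa [hψ] using h v (by simpa [hφ] using hv)
  rw [Set.range_const, Submodule.mem_span_singleton] at hspan
  obtain ⟨c, rfl⟩ := hspan
  exact ⟨c, eq_of_isHomogeneous_one_of_eval_eq hg ((homogeneousSubmodule σ k 1).smul_mem c hf)
    fun v => by simp [← hψ, hφ, smul_eval]⟩

theorem mem_range_of_eval_eq_zero [Fintype σ] [Fintype τ] (hf : f.IsHomogeneous 1) (hf0 : f ≠ 0)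
    (hcard : Fintype.card τ + 1 = Fintype.card σ) {e : (τ → k) →ₗ[k] (σ → k)}
    (he : Function.Injective e) (hef : ∀ w, eval (e w) f = 0) {v : σ → k} (hv : eval v f = 0) :
    v ∈ LinearMap.range e := by
  obtain ⟨φ, hφ⟩ := exists_dual_eq_eval hf
  have hφ0 : φ ≠ 0 := by
    rintro rfl
    exact hf0 (eq_of_isHomogeneous_one_of_eval_eq hf (isHomogeneous_zero _ _ _)
      fun v => by simp [← hφ])
  have hle : LinearMap.range e ≤ LinearMap.ker φ := by
    rintro _ ⟨w, rfl⟩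
    simpa [hφ] using hef w
  have hrank : Module.finrank k (LinearMap.range e) = Module.finrank k (LinearMap.ker φ) := by
    have := Module.Dual.finrank_ker_add_one_of_ne_zero hφ0
    rw [Module.finrank_fintype_fun_eq_card] at this
    rw [LinearMap.finrank_range_of_inj he, Module.finrank_fintype_fun_eq_card]
    lia
  rw [Submodule.eq_of_le_of_finrank_eq hle hrank, LinearMap.mem_ker, hφ, hv]

end LinearForm

section LinearPullback

variable {k σ τ υ : Type*} [Field k] [Fintype τ] {f g : MvPolynomial σ k} {d r : ℕ}

/-- The algebra map `f ↦ f ∘ e` on polynomial functions induced by a linear map `e`. -/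
noncomputable def linearPullback (e : (τ → k) →ₗ[k] (σ → k)) :
    MvPolynomial σ k →ₐ[k] MvPolynomial τ k :=
  bind₁ (LinearMap.toMatrix' e).toMvPolynomial

theorem eval_linearPullback (e : (τ → k) →ₗ[k] (σ → k)) (f : MvPolynomial σ k) (w : τ → k) :
    eval w (linearPullback e f) = eval (e w) f := by
  induction f using MvPolynomial.induction_on with
  | C a => simp [linearPullback]
  | add f g hf hg => simp only [map_add, hf, hg]
  | mul_X f i hf =>
    simp only [map_mul, hf, eval_X]
    simp [linearPullback, Matrix.toMvPolynomial_eval_eq_apply]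

theorem isHomogeneous_linearPullback (e : (τ → k) →ₗ[k] (σ → k))
    (hf : f.IsHomogeneous d) : (linearPullback e f).IsHomogeneous d := by
  have := hf.aeval _ (Matrix.toMvPolynomial_isHomogeneous (LinearMap.toMatrix' e))
  rwa [one_mul] at this

theorem isHomogeneousDerivation_linearPullback_smul_eulerDerivation [Nonempty σ]
    {e : (τ → k) →ₗ[k] (σ → k)} (he : Function.Injective (linearPullback e))
    (hf : IsHomogeneousDerivation (f • eulerDerivation k σ) r) :
    IsHomogeneousDerivation (linearPullback e f • eulerDerivation k τ) r := fun i => by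
  obtain ⟨j⟩ := ‹Nonempty σ›
  have hfX : (linearPullback e f * linearPullback e (X j)).IsHomogeneous r := by
    simpa [eulerDerivation] using isHomogeneous_linearPullback e (hf j)
  have hX0 : linearPullback e (X j) ≠ 0 := (map_ne_zero_iff _ he).2 (X_ne_zero j)
  simpa [eulerDerivation] using isHomogeneous_mul_of_isHomogeneous_mul
    (isHomogeneous_linearPullback e (isHomogeneous_X k j)) hX0 (isHomogeneous_X k i) hfX

variable [Fintype σ]

theorem linearPullback_comp (e : (τ → k) →ₗ[k] (σ → k)) (p : (σ → k) →ₗ[k] (υ → k))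
    (f : MvPolynomial υ k) :
    linearPullback e (linearPullback p f) = linearPullback (p ∘ₗ e) f := by
  rw [linearPullback, linearPullback, linearPullback, bind₁_bind₁]
  congr 2
  funext i
  rw [LinearMap.toMatrix'_comp, Matrix.toMvPolynomial_mul]

theorem linearPullback_id (f : MvPolynomial σ k) :
    linearPullback LinearMap.id f = f := by
  rw [linearPullback, LinearMap.toMatrix'_id, Matrix.toMvPolynomial_one, bind₁_X_left,
    AlgHom.id_apply]

theorem leftInverse_linearPullback {e : (τ → k) →ₗ[k] (σ → k)} {p : (σ → k) →ₗ[k] (τ → k)}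
    (h : p ∘ₗ e = LinearMap.id) : Function.LeftInverse (linearPullback e) (linearPullback p) :=
  fun f => by rw [linearPullback_comp, h, linearPullback_id]

theorem IsHomogeneousDerivation.inducedDerivation_linearPullback
    {D : Derivation k (MvPolynomial σ k) (MvPolynomial σ k)}
    (hD : IsHomogeneousDerivation D r) {e : (τ → k) →ₗ[k] (σ → k)} {p : (σ → k) →ₗ[k] (τ → k)}
    (h : Function.LeftInverse (linearPullback e) (linearPullback p)) :
    IsHomogeneousDerivation (inducedDerivation D h) r := fun j =>
  isHomogeneous_linearPullback e
    (hD.apply (isHomogeneous_linearPullback p (isHomogeneous_X k j)))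

theorem linearPullback_eq_zero_iff_dvd (hf : f.IsHomogeneous 1) (hf0 : f ≠ 0)
    (hcard : Fintype.card τ + 1 = Fintype.card σ) {e : (τ → k) →ₗ[k] (σ → k)}
    (he : Function.Injective e) (hef : ∀ w, eval (e w) f = 0) :
    linearPullback e g = 0 ↔ f ∣ g := by
  have hf_zero : linearPullback e f = 0 :=
    eq_of_isHomogeneous_one_of_eval_eq (isHomogeneous_linearPullback e hf)
      (isHomogeneous_zero _ _ _) fun w => by rw [eval_linearPullback, hef, map_zero]
  refine ⟨fun hg => ?_, fun ⟨q, hq⟩ => by rw [hq, map_mul, hf_zero, zero_mul]⟩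
  obtain ⟨p, hp⟩ := LinearMap.exists_leftInverse_of_injective e (LinearMap.ker_eq_bot.2 he)
  have hX (i : σ) : f ∣ X i - linearPullback (e ∘ₗ p) (X i) := by
    obtain ⟨c, hc⟩ := exists_eq_smul_of_eval_eq_zero hf
      ((isHomogeneous_X k i).sub (isHomogeneous_linearPullback (e ∘ₗ p) (isHomogeneous_X k i)))
      fun v hv => by
        obtain ⟨w, rfl⟩ := mem_range_of_eval_eq_zero hf hf0 hcard he hef hv
        have hpw : p (e w) = w := LinearMap.congr_fun hp w
        simp [eval_linearPullback, hpw]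
    exact ⟨C c, by rw [hc, smul_eq_C_mul, mul_comm]⟩
  -- Modulo `f`, the pullback along the projection `e ∘ p` onto `ker f` is the identity.
  have hmk : (Ideal.Quotient.mkₐ k (Ideal.span {f})).comp (linearPullback (e ∘ₗ p)) =
      Ideal.Quotient.mkₐ k (Ideal.span {f}) := algHom_ext fun i =>
    (Ideal.Quotient.eq.2 (Ideal.mem_span_singleton.2 (hX i))).symm
  have hg_mk := AlgHom.congr_fun hmk g
  rw [AlgHom.comp_apply, ← linearPullback_comp, hg, map_zero, map_zero] at hg_mk
  exact Ideal.mem_span_singleton.1 (Ideal.Quotient.eq_zero_iff_mem.1 hg_mk.symm)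

end LinearPullback

section Arrangement

variable {k : Type*} [Field k] {n r : ℕ} {A : Finset (MvPolynomial (Fin n) k)}
  {D E : Derivation k (MvPolynomial (Fin n) k) (MvPolynomial (Fin n) k)}

/-- `D` is a logarithmic derivation of `A`, i.e. lies in the module `D(A)`. -/
def IsLogarithmic (A : Finset (MvPolynomial (Fin n) k))
    (D : Derivation k (MvPolynomial (Fin n) k) (MvPolynomial (Fin n) k)) : Prop :=
  ∀ α ∈ A, α ∣ D α

namespace IsArrangement

theorem subset {B : Finset (MvPolynomial (Fin n) k)} (hA : IsArrangement A) (h : B ⊆ A) :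
    IsArrangement B :=
  ⟨fun α hα => hA.1 α (h hα), fun α hα β hβ => hA.2 α (h hα) β (h hβ)⟩

theorem prime (hA : IsArrangement A) {α : MvPolynomial (Fin n) k} (hα : α ∈ A) : Prime α :=
  prime_of_isHomogeneous_one (hA.1 α hα).2 (hA.1 α hα).1

theorem not_dvd (hA : IsArrangement A) {α β : MvPolynomial (Fin n) k} (hα : α ∈ A) (hβ : β ∈ A)
    (hne : α ≠ β) : ¬ α ∣ β := fun h => by
  obtain ⟨c, hc⟩ := exists_eq_smul_of_dvd_of_isHomogeneous_one (hA.1 α hα).2 (hA.1 β hβ).2 h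
  exact hA.2 β hβ α hα hne.symm c hc

theorem Qpoly_ne_zero (hA : IsArrangement A) : Qpoly A ≠ 0 :=
  Finset.prod_ne_zero_iff.2 fun α hα => (hA.1 α hα).1

theorem isHomogeneous_Qpoly (hA : IsArrangement A) : (Qpoly A).IsHomogeneous A.card := by
  simpa [Qpoly] using IsHomogeneous.prod A id (fun _ => 1) fun α hα => (hA.1 α hα).2

theorem isLogarithmic_of_apply_Qpoly_eq_zero (hA : IsArrangement A) (hD : D (Qpoly A) = 0) :
    IsLogarithmic A D := fun α hα =>
  dvd_derivation_of_dvd_derivation_prod (f := id) D hα (hA.prime hα)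
    (fun _ hβ hne => hA.not_dvd hα hβ hne.symm) (hD ▸ dvd_zero α)

end IsArrangement

theorem mdr_eq_sInf (A : Finset (MvPolynomial (Fin n) k)) :
    mdr A = sInf {r | ∃ D : Derivation k (MvPolynomial (Fin n) k) (MvPolynomial (Fin n) k),
      D ≠ 0 ∧ IsHomogeneousDerivation D r ∧ D (Qpoly A) = 0} := by
  rw [mdr]
  congr 1
  ext r
  simp only [Set.mem_ofPred_eq, (mkDerivationEquiv k).surjective.exists]
  refine exists_congr fun θ => ?_
  have hX (j : Fin n) : mkDerivationEquiv k θ (X j) = θ j := mkDerivation_X k θ j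
  simp only [ne_eq, EmbeddingLike.map_eq_zero_iff, IsHomogeneousDerivation, hX,
    derivation_apply_eq_sum (mkDerivationEquiv k θ), applyDer]

theorem mdr_le (hD0 : D ≠ 0) (hD : IsHomogeneousDerivation D r) (hDQ : D (Qpoly A) = 0) :
    mdr A ≤ r :=
  (mdr_eq_sInf A).trans_le (Nat.sInf_le ⟨D, hD0, hD, hDQ⟩)

theorem IsArrangement.exists_isHomogeneousDerivation_mdr [Nontrivial (Fin n)]
    (hA : IsArrangement A) :
    ∃ D : Derivation k (MvPolynomial (Fin n) k) (MvPolynomial (Fin n) k),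
      D ≠ 0 ∧ IsHomogeneousDerivation D (mdr A) ∧ D (Qpoly A) = 0 := by
  rw [mdr_eq_sInf]
  exact Nat.sInf_mem (exists_isHomogeneousDerivation_apply_eq_zero hA.isHomogeneous_Qpoly)

theorem IsArrangement.isLogarithmic_smul_eulerDerivation (hA : IsArrangement A)
    (g : MvPolynomial (Fin n) k) : IsLogarithmic A (g • eulerDerivation k (Fin n)) :=
  fun α hα => by simp [eulerDerivation_apply_of_isHomogeneous (hA.1 α hα).2]

theorem IsLogarithmic.sub (hD : IsLogarithmic A D) (hE : IsLogarithmic A E) :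
    IsLogarithmic A (D - E) :=
  fun α hα => dvd_sub (hD α hα) (hE α hα)

theorem IsLogarithmic.erase_of_smul (hA : IsArrangement A) {H : MvPolynomial (Fin n) k}
    (hH : H ∈ A) (hD : IsLogarithmic A (H • D)) : IsLogarithmic (A.erase H) D := fun L hL => by
  obtain ⟨hLH, hLA⟩ := Finset.mem_erase.1 hL
  exact ((hA.prime hLA).dvd_or_dvd (hD L hLA)).resolve_left (hA.not_dvd hLA hH hLH)

theorem IsLogarithmic.inducedDerivation (hD : IsLogarithmic A D) {H : MvPolynomial (Fin n) k}
    (hH : H ∈ A) {m : ℕ} {B : Finset (MvPolynomial (Fin m) k)}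
    {π : MvPolynomial (Fin n) k →ₐ[k] MvPolynomial (Fin m) k}
    {s : MvPolynomial (Fin m) k →ₐ[k] MvPolynomial (Fin n) k} (h : Function.LeftInverse π s)
    (hπ : ∀ f, π f = 0 ↔ H ∣ f) (hB : ∀ β ∈ B, ∃ L ∈ A, ∃ c : k, β = c • π L) :
    IsLogarithmic B (inducedDerivation D h) := fun β hβ => by
  obtain ⟨L, hL, c, rfl⟩ := hB β hβ
  rw [Derivation.map_smul, inducedDerivation_map h hπ (hD H hH), smul_eq_C_mul, smul_eq_C_mul]
  exact mul_dvd_mul_left _ (map_dvd π (hD L hL))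

section CharZero

variable [CharZero k]

theorem IsArrangement.eq_zero_of_smul_eulerDerivation_apply_Qpoly (hA : IsArrangement A)
    (hne : A.Nonempty) {g : MvPolynomial (Fin n) k}
    (h : (g • eulerDerivation k (Fin n)) (Qpoly A) = 0) : g = 0 := by
  simpa [eulerDerivation_apply_of_isHomogeneous hA.isHomogeneous_Qpoly, hA.Qpoly_ne_zero,
    hne.ne_empty] using h

theorem IsLogarithmic.exists_eq_smul_eulerDerivation (hA : IsArrangement A) (hne : A.Nonempty)
    (hD : IsLogarithmic A D) (hDr : IsHomogeneousDerivation D r) (hr : r < mdr A) :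
    ∃ g : MvPolynomial (Fin n) k, D = g • eulerDerivation k (Fin n) := by
  obtain ⟨q, hq⟩ : Qpoly A ∣ D (Qpoly A) := prod_dvd_derivation_prod D hD
  have hcard : (A.card : k) ≠ 0 := Nat.cast_ne_zero.2 hne.card_ne_zero
  -- By Euler's formula `D - g • θ_E` kills `Q(A)`, so it vanishes by minimality of `mdr A`.
  let g := (A.card : k)⁻¹ • q
  have hQg : Qpoly A * g = (A.card : k)⁻¹ • D (Qpoly A) := by rw [hq, mul_smul_comm]
  have hgQ : (g • eulerDerivation k (Fin n)) (Qpoly A) = D (Qpoly A) := by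
    rw [Derivation.smul_apply, eulerDerivation_apply_of_isHomogeneous hA.isHomogeneous_Qpoly,
      smul_eq_mul, mul_smul_comm, mul_comm, hQg, ← Nat.cast_smul_eq_nsmul k, smul_inv_smul₀ hcard]
  have hg : IsHomogeneousDerivation (g • eulerDerivation k (Fin n)) r := fun i => by
    refine isHomogeneous_of_mul hA.isHomogeneous_Qpoly hA.Qpoly_ne_zero ?_
    have hQg_hom : (Qpoly A * g).IsHomogeneous (r + (A.card - 1)) :=
      hQg ▸ (homogeneousSubmodule _ k _).smul_mem _ (hDr.apply hA.isHomogeneous_Qpoly)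
    have hdeg : r + (A.card - 1) + 1 = A.card + r := by have := hne.card_pos; lia
    simpa [eulerDerivation, mul_assoc, hdeg] using hQg_hom.mul (isHomogeneous_X k i)
  by_contra! hD_ne
  refine hr.not_ge (mdr_le (sub_ne_zero.2 (hD_ne g)) (hDr.sub hg) ?_)
  rw [Derivation.sub_apply, hgQ, sub_self]

end CharZero

end Arrangement

section Restriction

variable {k : Type*} [Field k] {n r : ℕ} {A : Finset (MvPolynomial (Fin n) k)}
  {H : MvPolynomial (Fin n) k} {B : Finset (MvPolynomial (Fin (n - 1)) k)}
  {D : Derivation k (MvPolynomial (Fin n) k) (MvPolynomial (Fin n) k)}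

namespace IsRestrictionOf

theorem nonempty (hB : IsRestrictionOf A H B) (hne : (A.erase H).Nonempty) : B.Nonempty := by
  obtain ⟨-, e, -, -, hBA⟩ := hB
  exact Finset.image_nonempty.1 (hBA ▸ hne.image _)

theorem exists_linearMap (hA : IsArrangement A) (hB : IsRestrictionOf A H B) :
    ∃ e : (Fin (n - 1) → k) →ₗ[k] (Fin n → k), Function.Injective e ∧
      (∀ w, eval (e w) H = 0) ∧ ∀ β ∈ B, ∃ L ∈ A, ∃ c : k, β = c • linearPullback e L := by
  obtain ⟨hB, e, he, heH, hBA⟩ := hB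
  refine ⟨e, he, heH, fun β hβ => ?_⟩
  obtain ⟨L, hL, hLβ⟩ := Finset.mem_image.1 (hBA ▸ Finset.mem_image_of_mem _ hβ)
  have hLA := Finset.mem_of_mem_erase hL
  refine ⟨L, hLA, exists_eq_smul_of_eval_eq_zero (isHomogeneous_linearPullback e (hA.1 L hLA).2)
    (hB.1 β hβ).2 fun w hw => ?_⟩
  rw [eval_linearPullback] at hw
  exact hLβ.subset hw

variable [CharZero k]

theorem exists_eq_smul_eulerDerivation_add_smul (hB : IsRestrictionOf A H B) (hn : 2 ≤ n)
    (hA : IsArrangement A) (hH : H ∈ A) (hne : (A.erase H).Nonempty) (hD : IsLogarithmic A D)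
    (hDr : IsHomogeneousDerivation D r) (hr : r < mdr B) :
    ∃ (f : MvPolynomial (Fin n) k)
      (φ : Derivation k (MvPolynomial (Fin n) k) (MvPolynomial (Fin n) k)),
      D = f • eulerDerivation k (Fin n) + H • φ ∧
        IsHomogeneousDerivation (f • eulerDerivation k (Fin n)) r := by
  obtain ⟨e, he, heH, hBA⟩ := hB.exists_linearMap hA
  obtain ⟨p, hp⟩ := LinearMap.exists_leftInverse_of_injective e (LinearMap.ker_eq_bot.2 he)
  have hinv := leftInverse_linearPullback hp
  have hker (g : MvPolynomial (Fin n) k) : linearPullback e g = 0 ↔ H ∣ g :=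
    linearPullback_eq_zero_iff_dvd (hA.1 H hH).2 (hA.1 H hH).1
      (by simp only [Fintype.card_fin]; lia) he heH
  have hη := hDr.inducedDerivation_linearPullback hinv
  obtain ⟨f, hf⟩ := (hD.inducedDerivation hH hinv hker hBA).exists_eq_smul_eulerDerivation hB.1
    (hB.nonempty hne) hη hr
  obtain ⟨φ, hφ⟩ := exists_eq_smul_of_dvd_apply_X
    (D := D - linearPullback p f • eulerDerivation k (Fin n)) (a := H) fun i => by
      rw [← hker, Derivation.sub_apply, map_sub, ← inducedDerivation_map hinv hker (hD H hH), hf]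
      simp [eulerDerivation_apply_of_isHomogeneous
        (isHomogeneous_linearPullback e (isHomogeneous_X k i)),
        eulerDerivation_apply_of_isHomogeneous (isHomogeneous_X k i), hinv f]
  have : Nonempty (Fin (n - 1)) := ⟨⟨0, by lia⟩⟩
  exact ⟨_, φ, sub_eq_iff_eq_add'.1 hφ,
    isHomogeneousDerivation_linearPullback_smul_eulerDerivation hinv.injective (hf ▸ hη)⟩

end IsRestrictionOf

theorem mdr_restriction_le_general [CharZero k] (hn : 2 ≤ n) (hA : IsArrangement A) (hH : H ∈ A)
    (hne : (A.erase H).Nonempty) (hB : IsRestrictionOf A H B) (h : mdr A ≤ mdr (A.erase H)) :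
    mdr B ≤ mdr A := by
  by_contra! hlt
  have := Fin.nontrivial_iff_two_le.2 hn
  obtain ⟨D, hD0, hDr, hDQ⟩ := hA.exists_isHomogeneousDerivation_mdr
  have hD := hA.isLogarithmic_of_apply_Qpoly_eq_zero hDQ
  obtain ⟨f, φ, hDφ, hf⟩ := hB.exists_eq_smul_eulerDerivation_add_smul hn hA hH hne hD hDr hlt
  have hHφ : D - f • eulerDerivation k (Fin n) = H • φ := sub_eq_of_eq_add' hDφ
  obtain ⟨g, rfl⟩ : ∃ g : MvPolynomial (Fin n) k, φ = g • eulerDerivation k (Fin n) := by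
    rcases eq_or_ne φ 0 with rfl | hφ0
    · exact ⟨0, (zero_smul _ _).symm⟩
    obtain ⟨c, hc, hφc⟩ := (hHφ ▸ hDr.sub hf).exists_of_smul (hA.1 H hH).2 (hA.1 H hH).1 hφ0
    have hφ := (hHφ ▸ hD.sub (hA.isLogarithmic_smul_eulerDerivation f)).erase_of_smul hA hH
    exact hφ.exists_eq_smul_eulerDerivation (hA.subset (A.erase_subset H)) hne hφc (by lia)
  rw [smul_smul, ← add_smul] at hDφ
  rw [hDφ] at hDQ
  apply hD0
  rw [hDφ, hA.eq_zero_of_smul_eulerDerivation_apply_Qpoly ⟨H, hH⟩ hDQ, zero_smul]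

end Restriction

/-- Let `ℓ ≥ 2`, let `A` be an essential hyperplane arrangement in `K^ℓ`,
let `H ∈ A`, and suppose `A' = A \ {H}` is also essential and nonempty. Let `r = r(A)`,
`r' = r(A')` and `r'' = r(A^H)`, where `A^H` is the restricted arrangement in
`H ≅ K^{ℓ-1}`. If `r = r'`, then `r'' ≤ r`. -/
theorem mdr_restriction_le (hl : 2 ≤ ℓ) (A : Finset (MvPolynomial (Fin ℓ) K))
    (hA : IsArrangement A) (hAess : IsEssential A)
    (H : MvPolynomial (Fin ℓ) K) (hH : H ∈ A)
    (hA'ess : IsEssential (A.erase H)) (hA'ne : (A.erase H).Nonempty)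
    (B : Finset (MvPolynomial (Fin (ℓ - 1)) K)) (hB : IsRestrictionOf A H B)
    (h : mdr A = mdr (A.erase H)) :
    mdr B ≤ mdr A :=
  mdr_restriction_le_general hl hA hH hA'ne hB h.le
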